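/- arXiv:2105.09001 — 2 statements merged into one kernel-verified Lean document; each statement's English description precedes it below -/
import Mathlib

section
/- Let n ≥ 2 and let R be a finite-dimensional complex solvable Leibniz algebra that is not nilpotent and whose nilradical N is a null-filiform Leibniz algebra of dimension n. Then dim R = n + 1 and R is isomorphic to R_0; equivalently, R admits a basis e_0, e_1, …, e_n in which the only nonzero products of basis elements are [e_i,e_1] = e_{i+1} for 0 ≤ i ≤ n−1 and [e_i,e_0] = −i·e_i for 1 ≤ i ≤ n. -/
section LeibnizGeneralities

variable {L : Type*} [AddCommGroup L] [Module ℂ L]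

/-- The Leibniz identity `[[a,b],c] = [[a,c],b] + [a,[b,c]]` for a bilinear bracket. -/
def IsLeibnizBracket (b : L →ₗ[ℂ] L →ₗ[ℂ] L) : Prop :=
  ∀ u v w : L, b (b u v) w = b (b u w) v + b u (b v w)

/-- The subspace spanned by all brackets of elements of `A` with elements of `B`. -/
def bracketSpan (b : L →ₗ[ℂ] L →ₗ[ℂ] L) (A B : Submodule ℂ L) : Submodule ℂ L :=
  Submodule.span ℂ {z | ∃ u ∈ A, ∃ v ∈ B, z = b u v}

/-- The lower central series of the subalgebra `N`:
`N^1 = N`, `N^{k+1} = [N^k, N]` (here `lowerCentral b N k` is `N^{k+1}`). -/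
def lowerCentral (b : L →ₗ[ℂ] L →ₗ[ℂ] L) (N : Submodule ℂ L) : ℕ → Submodule ℂ L
  | 0 => N
  | k + 1 => bracketSpan b (lowerCentral b N k) N

/-- The derived series of the algebra:
`L^{(1)} = L`, `L^{(s+1)} = [L^{(s)}, L^{(s)}]` (here `leibnizDerivedSeries b s` is `L^{(s+1)}`). -/
def leibnizDerivedSeries (b : L →ₗ[ℂ] L →ₗ[ℂ] L) : ℕ → Submodule ℂ L
  | 0 => ⊤
  | s + 1 => bracketSpan b (leibnizDerivedSeries b s) (leibnizDerivedSeries b s)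

/-- The subalgebra `N` is nilpotent: some term of its lower central series vanishes. -/
def IsNilpotentOn (b : L →ₗ[ℂ] L →ₗ[ℂ] L) (N : Submodule ℂ L) : Prop :=
  ∃ k, lowerCentral b N k = ⊥

/-- The algebra is solvable: some term of its derived series vanishes. -/
def IsSolvableBracket (b : L →ₗ[ℂ] L →ₗ[ℂ] L) : Prop :=
  ∃ s, leibnizDerivedSeries b s = ⊥

/-- A (two-sided) ideal of the Leibniz algebra. -/
def IsLeibnizIdeal (b : L →ₗ[ℂ] L →ₗ[ℂ] L) (I : Submodule ℂ L) : Prop :=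
  bracketSpan b I ⊤ ≤ I ∧ bracketSpan b ⊤ I ≤ I

/-- `N` is the nilradical: a nilpotent ideal containing every nilpotent ideal. -/
def IsNilradical (b : L →ₗ[ℂ] L →ₗ[ℂ] L) (N : Submodule ℂ L) : Prop :=
  IsLeibnizIdeal b N ∧ IsNilpotentOn b N ∧
    ∀ J : Submodule ℂ L, IsLeibnizIdeal b J → IsNilpotentOn b J → J ≤ N

/-- `N` is null-filiform of dimension `n`: `dim N^i = n + 1 - i` for `1 ≤ i ≤ n + 1`. -/
def IsNullFiliform (b : L →ₗ[ℂ] L →ₗ[ℂ] L) (N : Submodule ℂ L) (n : ℕ) : Prop :=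
  Module.finrank ℂ N = n ∧
    ∀ i : ℕ, 1 ≤ i → i ≤ n + 1 →
      Module.finrank ℂ (lowerCentral b N (i - 1)) = n + 1 - i

end LeibnizGeneralities

/-- The bracket of the Leibniz algebra `R₀` on `Fin (n+1) → ℂ` (with `e_i = Pi.single i 1`):
the only nonzero products of basis vectors are `[e_i, e_1] = e_{i+1}` for `0 ≤ i ≤ n-1` and
`[e_i, e_0] = -i • e_i` for `1 ≤ i ≤ n`. -/
def bracketR0 (n : ℕ) (u v : Fin (n + 1) → ℂ) : Fin (n + 1) → ℂ := fun k =>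
  (if 1 ≤ k.val then u ⟨k.val - 1, lt_of_le_of_lt (Nat.sub_le _ _) k.isLt⟩ * v 1 else 0)
    - (k.val : ℂ) * u k * v 0

/-!
Right multiplication by `x` acts on the line `N / N²` by a scalar `α x`, and then on
`Nᵏ / Nᵏ⁺¹` by `k * α x`. The linear form `α` vanishes on `N` and on all brackets, and its kernel
acts nilpotently on `N`, so solvability forces `ker α = N`. As the algebra is not nilpotent, some
`x` has `α x = -1`. Right multiplication by `x` has eigenvalues `-1, -2, …, -n` on `N`; solving
linear equations for it in `N²` yields a generator `v` of `N` with `[v, x] = -v` and a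
correction of `x` by an element of `N²` with `[x, x] = 0`. Then `[x, v] = v` is automatic, and
`x, v, [v, v], [[v, v], v], …` is the required basis.
-/

section Linear

open Submodule Module

lemma natCast_add_one_mul_ne_self {R : Type*} [Ring R] [NoZeroDivisors R] [CharZero R] {a : R}
    (ha : a ≠ 0) (j : ℕ) (hj : 1 ≤ j) : (j + 1 : R) * a ≠ a := by
  rw [add_one_mul, ne_eq, add_eq_right]
  exact mul_ne_zero (Nat.cast_ne_zero.2 (Nat.one_le_iff_ne_zero.1 hj)) ha

lemma mem_span_singleton_sup_iff {R M : Type*} [Ring R] [AddCommGroup M] [Module R M]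
    {A : Submodule R M} {u v : M} : u ∈ (R ∙ v) ⊔ A ↔ ∃ c : R, u - c • v ∈ A := by
  simp only [mem_sup, mem_span_singleton, exists_exists_eq_and]
  refine exists_congr fun c => ⟨?_, fun h => ⟨_, h, add_sub_cancel _ _⟩⟩
  rintro ⟨z, hz, rfl⟩
  rwa [add_sub_cancel_left]

lemma exists_le_span_singleton_sup_of_finrank_eq_add_one {K V : Type*} [Field K] [AddCommGroup V]
    [Module K V] {A N : Submodule K V} (hAN : A ≤ N) (hdim : finrank K N = finrank K A + 1) :
    ∃ e ∈ N, e ∉ A ∧ N ≤ (K ∙ e) ⊔ A := by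
  have : Module.Finite K N := finite_of_finrank_pos (by omega)
  have hNA : ¬ N ≤ A := fun h => by
    rw [le_antisymm hAN h] at hdim
    omega
  obtain ⟨e, he, heA⟩ := Set.not_subset.1 hNA
  have hle : (K ∙ e) ⊔ A ≤ N := sup_le ((span_singleton_le_iff_mem _ _).2 he) hAN
  have : Module.Finite K ((K ∙ e) ⊔ A : Submodule K V) := finiteDimensional_of_le hle
  have hlt : A < (K ∙ e) ⊔ A := by
    rw [right_lt_sup, span_singleton_le_iff_mem]
    exact heA
  have hfinrank := finrank_lt_finrank_of_lt hlt
  exact ⟨e, he, heA, (eq_of_le_of_finrank_le hle (by omega)).ge⟩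

end Linear

section Leibniz

open Submodule Module

variable {L : Type*} [AddCommGroup L] [Module ℂ L] {b : L →ₗ[ℂ] L →ₗ[ℂ] L}
  {A B C I J N : Submodule ℂ L} {a c : ℂ} {e u v w x y z : L} {k n : ℕ}

/-! ### Spans of brackets -/

lemma bracketSpan_eq_map₂ (b : L →ₗ[ℂ] L →ₗ[ℂ] L) (A B : Submodule ℂ L) :
    bracketSpan b A B = map₂ b A B := by
  rw [map₂_eq_span_image2, bracketSpan]
  congr 1 with z
  simp only [Set.mem_ofPred_eq, Set.mem_image2, SetLike.mem_coe, eq_comm]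

lemma bracket_mem_bracketSpan (hu : u ∈ A) (hv : v ∈ B) : b u v ∈ bracketSpan b A B :=
  subset_span ⟨u, hu, v, hv, rfl⟩

lemma bracketSpan_le : bracketSpan b A B ≤ C ↔ ∀ u ∈ A, ∀ v ∈ B, b u v ∈ C := by
  rw [bracketSpan_eq_map₂, map₂_le]

lemma bracketSpan_mono {A' B' : Submodule ℂ L} (hA : A ≤ A') (hB : B ≤ B') :
    bracketSpan b A B ≤ bracketSpan b A' B' := by
  simpa only [bracketSpan_eq_map₂] using map₂_le_map₂ hA hB

/-! ### Ideals and the derived series -/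

lemma IsLeibnizBracket.bracket_bracket (hL : IsLeibnizBracket b) (u v w : L) :
    b u (b v w) = b (b u v) w - b (b u w) v :=
  eq_sub_of_add_eq' (hL u v w).symm

lemma IsLeibnizIdeal.bracket_mem_of_left (hI : IsLeibnizIdeal b I) (hu : u ∈ I) (v : L) :
    b u v ∈ I :=
  hI.1 (bracket_mem_bracketSpan hu mem_top)

lemma IsLeibnizIdeal.bracket_mem_of_right (hI : IsLeibnizIdeal b I) (u : L) (hv : v ∈ I) :
    b u v ∈ I :=
  hI.2 (bracket_mem_bracketSpan mem_top hv)

lemma IsLeibnizIdeal.bracketSpan_self_le (hI : IsLeibnizIdeal b I) : bracketSpan b I I ≤ I :=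
  (bracketSpan_mono le_rfl le_top).trans hI.1

lemma IsLeibnizBracket.bracketSpan_self_isLeibnizIdeal (hL : IsLeibnizBracket b)
    (hI : IsLeibnizIdeal b I) : IsLeibnizIdeal b (bracketSpan b I I) := by
  have hright (x : L) : bracketSpan b I I ≤ (bracketSpan b I I).comap (b.flip x) := by
    refine bracketSpan_le.2 fun p hp q hq => ?_
    rw [mem_comap, LinearMap.flip_apply, hL]
    exact add_mem (bracket_mem_bracketSpan (hI.bracket_mem_of_left hp x) hq)
      (bracket_mem_bracketSpan hp (hI.bracket_mem_of_left hq x))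
  have hleft (x : L) : bracketSpan b I I ≤ (bracketSpan b I I).comap (b x) := by
    refine bracketSpan_le.2 fun p hp q hq => ?_
    rw [mem_comap, hL.bracket_bracket]
    exact sub_mem (bracket_mem_bracketSpan (hI.bracket_mem_of_right x hp) hq)
      (bracket_mem_bracketSpan (hI.bracket_mem_of_right x hq) hp)
  exact ⟨bracketSpan_le.2 fun u hu x _ => hright x hu, bracketSpan_le.2 fun x _ u hu => hleft x hu⟩

lemma IsLeibnizBracket.leibnizDerivedSeries_isLeibnizIdeal (hL : IsLeibnizBracket b) (s : ℕ) :
    IsLeibnizIdeal b (leibnizDerivedSeries b s) := by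
  induction s with
  | zero => exact ⟨le_top, le_top⟩
  | succ s ih => exact hL.bracketSpan_self_isLeibnizIdeal ih

/-! ### The lower central series -/

lemma bracket_mem_lowerCentral_succ (hu : u ∈ lowerCentral b N k) (hv : v ∈ N) :
    b u v ∈ lowerCentral b N (k + 1) :=
  bracket_mem_bracketSpan hu hv

lemma lowerCentral_antitone (hN : bracketSpan b N N ≤ N) : Antitone (lowerCentral b N) := by
  refine antitone_nat_of_succ_le fun k => ?_
  induction k with
  | zero => exact hN
  | succ k ih => exact bracketSpan_mono ih le_rfl

lemma IsLeibnizBracket.bracket_mem_lowerCentral (hL : IsLeibnizBracket b) {i j : ℕ}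
    (hu : u ∈ lowerCentral b N i) (hv : v ∈ lowerCentral b N j) :
    b u v ∈ lowerCentral b N (i + j + 1) := by
  induction j generalizing i u v with
  | zero => exact bracket_mem_lowerCentral_succ hu hv
  | succ j ih =>
    suffices lowerCentral b N (j + 1) ≤ (lowerCentral b N (i + (j + 1) + 1)).comap (b u) from
      this hv
    refine bracketSpan_le.2 fun p hp q hq => ?_
    rw [mem_comap, hL.bracket_bracket]
    refine sub_mem (bracket_mem_lowerCentral_succ (ih hu hp) hq) ?_
    rw [← add_assoc, add_right_comm i]
    exact ih (bracket_mem_lowerCentral_succ hu hq) hp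

lemma lowerCentral_eq_bot_of_le {m : ℕ} (hk : lowerCentral b N k = ⊥) (hkm : k ≤ m) :
    lowerCentral b N m = ⊥ := by
  induction m, hkm using Nat.le_induction with
  | base => exact hk
  | succ m _ ih => rw [lowerCentral, ih, bracketSpan_eq_map₂, map₂_bot_left]

lemma IsNilpotentOn.decreasing_induction (hnil : IsNilpotentOn b N) {P : ℕ → Prop}
    (bot : ∀ k, lowerCentral b N k = ⊥ → P k) (step : ∀ k, P (k + 1) → P k) (k : ℕ) : P k := by
  obtain ⟨m, hm⟩ := hnil
  rcases le_total m k with hmk | hkm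
  · exact bot k (lowerCentral_eq_bot_of_le hm hmk)
  · exact Nat.decreasingInduction (fun i _ => step i) (bot m hm) hkm

lemma IsNilpotentOn.of_bracketSpan_lowerCentral_le (hnil : IsNilpotentOn b N)
    (hI : bracketSpan b I I ≤ N)
    (hact : ∀ k, bracketSpan b (lowerCentral b N k) I ≤ lowerCentral b N (k + 1)) :
    IsNilpotentOn b I := by
  obtain ⟨m, hm⟩ := hnil
  have hle (k : ℕ) : lowerCentral b I (k + 1) ≤ lowerCentral b N k := by
    induction k with
    | zero => exact hI
    | succ k ih => exact (bracketSpan_mono ih le_rfl).trans (hact k)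
  exact ⟨m + 1, le_bot_iff.1 (hm ▸ hle m)⟩

lemma IsNilradical.le_of_bracketSpan_lowerCentral_le (hN : IsNilradical b N)
    (hL : IsLeibnizBracket b) (hsolv : IsSolvableBracket b) (hJ : bracketSpan b ⊤ ⊤ ≤ J)
    (hact : ∀ k, bracketSpan b (lowerCentral b N k) J ≤ lowerCentral b N (k + 1)) : J ≤ N := by
  obtain ⟨s, hs⟩ := hsolv
  -- Descend along `J ⊓ L⁽ˢ⁾`: each is an ideal whose square lies in the next one.
  have hJs : J ⊓ leibnizDerivedSeries b s ≤ N := by simp [hs]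
  clear hs
  induction s with
  | zero => simpa [leibnizDerivedSeries] using hJs
  | succ s ih =>
    have hD := hL.leibnizDerivedSeries_isLeibnizIdeal s
    have hideal : IsLeibnizIdeal b (J ⊓ leibnizDerivedSeries b s) :=
      ⟨le_inf ((bracketSpan_mono le_top le_rfl).trans hJ)
          ((bracketSpan_mono inf_le_right le_rfl).trans hD.1),
        le_inf ((bracketSpan_mono le_rfl le_top).trans hJ)
          ((bracketSpan_mono le_rfl inf_le_right).trans hD.2)⟩
    have hsq : bracketSpan b (J ⊓ leibnizDerivedSeries b s) (J ⊓ leibnizDerivedSeries b s) ≤ N :=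
      (le_inf ((bracketSpan_mono le_top le_top).trans hJ)
        (bracketSpan_mono inf_le_right inf_le_right)).trans hJs
    exact ih (hN.2.2 _ hideal (hN.2.1.of_bracketSpan_lowerCentral_le hsq fun k =>
      (bracketSpan_mono le_rfl inf_le_left).trans (hact k)))

/-! ### Weights on `N / N²` -/

/-- Right multiplication by `x` acts on `N / N²` as the scalar `a`; here `N²` is
`lowerCentral b N 1`. -/
def HasWeight (b : L →ₗ[ℂ] L →ₗ[ℂ] L) (N : Submodule ℂ L) (x : L) (a : ℂ) : Prop :=
  ∀ u ∈ N, b u x - a • u ∈ lowerCentral b N 1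

lemma hasWeight_zero_of_mem (hx : x ∈ N) : HasWeight b N x 0 := fun u hu => by
  simpa using bracket_mem_lowerCentral_succ (b := b) (k := 0) hu hx

lemma HasWeight.eq (hN : ¬ N ≤ lowerCentral b N 1) (ha : HasWeight b N x a)
    (hc : HasWeight b N x c) : a = c := by
  obtain ⟨u, hu, hu'⟩ := Set.not_subset.1 hN
  by_contra hac
  refine hu' ((smul_mem_iff _ (sub_ne_zero.2 hac)).1 ?_)
  convert sub_mem (hc u hu) (ha u hu) using 1
  module

lemma HasWeight.bracket (hL : IsLeibnizBracket b) (hN : IsLeibnizIdeal b N)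
    (hx : HasWeight b N x a) (hy : HasWeight b N y c) : HasWeight b N (b x y) 0 := by
  intro u hu
  have hux := hx _ (hN.bracket_mem_of_left hu y)
  have huy := hy _ (hN.bracket_mem_of_left hu x)
  have hx' := smul_mem _ c (hx u hu)
  have hy' := smul_mem _ a (hy u hu)
  convert sub_mem (add_mem huy hx') (add_mem hux hy') using 1
  rw [hL.bracket_bracket]
  module

lemma HasWeight.bracket_sub_smul_mem (hL : IsLeibnizBracket b) (hx : HasWeight b N x a)
    (hu : u ∈ lowerCentral b N k) :
    b u x - ((k + 1 : ℂ) * a) • u ∈ lowerCentral b N (k + 1) := by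
  induction k generalizing u with
  | zero => simpa using hx u hu
  | succ k ih =>
    suffices lowerCentral b N (k + 1) ≤ (lowerCentral b N (k + 2)).comap
        (b.flip x - (((k + 1 : ℕ) + 1 : ℂ) * a) • LinearMap.id) from this hu
    refine bracketSpan_le.2 fun p hp q hq => ?_
    rw [mem_comap]
    convert add_mem (bracket_mem_lowerCentral_succ (ih hp) hq)
      (hL.bracket_mem_lowerCentral hp (hx q hq)) using 1
    simp only [LinearMap.sub_apply, LinearMap.flip_apply, LinearMap.smul_apply,
      LinearMap.id_apply, map_sub, map_smul, hL p q x]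
    push_cast
    module

lemma HasWeight.eq_zero_of_bracket_eq_smul (hL : IsLeibnizBracket b) (hnil : IsNilpotentOn b N)
    (hx : HasWeight b N x a) (hc : ∀ j ≥ k, (j + 1 : ℂ) * a ≠ c) (hw : w ∈ lowerCentral b N k)
    (hwx : b w x = c • w) : w = 0 := by
  induction k using hnil.decreasing_induction with
  | bot k hk => simpa [hk] using hw
  | step k ih =>
    refine ih (fun j hj => hc j (Nat.le_of_succ_le hj)) ?_
    have hmem := hx.bracket_sub_smul_mem hL hw
    rw [hwx, ← sub_smul] at hmem
    exact (smul_mem_iff _ (sub_ne_zero.2 (hc k le_rfl).symm)).1 hmem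

lemma HasWeight.exists_bracket_sub_smul_eq (hL : IsLeibnizBracket b)
    (hN : bracketSpan b N N ≤ N) (hnil : IsNilpotentOn b N) (hx : HasWeight b N x a)
    (hc : ∀ j ≥ k, (j + 1 : ℂ) * a ≠ c) (hz : z ∈ lowerCentral b N k) :
    ∃ y ∈ lowerCentral b N k, b y x - c • y = z := by
  induction k using hnil.decreasing_induction generalizing z with
  | bot k hk => exact ⟨0, zero_mem _, by simpa [hk, eq_comm] using hz⟩
  | step k ih =>
    have hne : (k + 1 : ℂ) * a - c ≠ 0 := sub_ne_zero.2 (hc k le_rfl)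
    set y₀ := ((k + 1 : ℂ) * a - c)⁻¹ • z
    have hy₀_mem : y₀ ∈ lowerCentral b N k := smul_mem _ _ hz
    have hz_eq : z = ((k + 1 : ℂ) * a - c) • y₀ := (smul_inv_smul₀ hne z).symm
    obtain ⟨y₁, hy₁_mem, hy₁⟩ := ih (fun j hj => hc j (Nat.le_of_succ_le hj))
      (hx.bracket_sub_smul_mem hL hy₀_mem)
    refine ⟨y₀ - y₁, sub_mem hy₀_mem (lowerCentral_antitone hN k.le_succ hy₁_mem), ?_⟩
    rw [hz_eq, map_sub, LinearMap.sub_apply, ← sub_eq_zero, ← sub_eq_zero.2 hy₁.symm]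
    module

lemma hasWeight_of_bracket_sub_smul_mem (hL : IsLeibnizBracket b) (hN : IsLeibnizIdeal b N)
    (hgen : N ≤ (ℂ ∙ e) ⊔ lowerCentral b N 1) (he : b e x - a • e ∈ lowerCentral b N 1) :
    HasWeight b N x a := by
  intro u hu
  obtain ⟨c, hc⟩ := mem_span_singleton_sup_iff.1 (hgen hu)
  have hcx : b (u - c • e) x ∈ lowerCentral b N 1 :=
    (hL.bracketSpan_self_isLeibnizIdeal hN).bracket_mem_of_left hc x
  convert sub_mem (add_mem hcx (smul_mem _ c he)) (smul_mem _ a hc) using 1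
  simp only [map_sub, map_smul, LinearMap.sub_apply, LinearMap.smul_apply]
  module

lemma exists_linear_hasWeight (hL : IsLeibnizBracket b) (hN : IsLeibnizIdeal b N) (he : e ∈ N)
    (he' : e ∉ lowerCentral b N 1) (hgen : N ≤ (ℂ ∙ e) ⊔ lowerCentral b N 1) :
    ∃ α : L →ₗ[ℂ] ℂ, ∀ x, HasWeight b N x (α x) := by
  obtain ⟨f, hfe, hf⟩ := exists_le_ker_of_notMem he'
  refine ⟨(f e)⁻¹ • f ∘ₗ b e, fun x => ?_⟩
  obtain ⟨a, ha⟩ := mem_span_singleton_sup_iff.1 (hgen (hN.bracket_mem_of_left he x))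
  have hfa : f (b e x) = a * f e := by
    simpa [sub_eq_zero] using hf ha
  have hαx : ((f e)⁻¹ • f ∘ₗ b e) x = a := by
    simp [hfa, mul_comm a, hfe]
  exact hαx ▸ hasWeight_of_bracket_sub_smul_mem hL hN hgen ha

lemma bracketSpan_top_le_ker_weight (hL : IsLeibnizBracket b) (hN : IsLeibnizIdeal b N)
    (hNsq : ¬ N ≤ lowerCentral b N 1) {α : L →ₗ[ℂ] ℂ} (hα : ∀ x, HasWeight b N x (α x)) :
    bracketSpan b ⊤ ⊤ ≤ LinearMap.ker α :=
  bracketSpan_le.2 fun x _ y _ => (hα _).eq hNsq ((hα x).bracket hL hN (hα y))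

lemma IsNilradical.ker_weight_eq (hN : IsNilradical b N) (hL : IsLeibnizBracket b)
    (hsolv : IsSolvableBracket b) (hNsq : ¬ N ≤ lowerCentral b N 1) {α : L →ₗ[ℂ] ℂ}
    (hα : ∀ x, HasWeight b N x (α x)) : LinearMap.ker α = N := by
  have hbracket := bracketSpan_top_le_ker_weight hL hN.1 hNsq hα
  refine le_antisymm (hN.le_of_bracketSpan_lowerCentral_le hL hsolv hbracket fun k => ?_)
    fun x hx => (hα x).eq hNsq (hasWeight_zero_of_mem hx)
  refine bracketSpan_le.2 fun u hu x hx => ?_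
  simpa [LinearMap.mem_ker.1 hx] using (hα x).bracket_sub_smul_mem hL hu

/-! ### Right powers of a generator -/

/-- The left-normed power `[[[v, v], v], …, v]` with `k + 1` factors, shifted by one so that
`rightPow b v k` lies in `lowerCentral b N k` for `v ∈ N`. -/
def rightPow (b : L →ₗ[ℂ] L →ₗ[ℂ] L) (v : L) : ℕ → L
  | 0 => v
  | k + 1 => b (rightPow b v k) v

lemma rightPow_mem_lowerCentral (hv : v ∈ N) (k : ℕ) : rightPow b v k ∈ lowerCentral b N k := by
  induction k with
  | zero => exact hv
  | succ k ih => exact bracket_mem_lowerCentral_succ ih hv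

lemma IsLeibnizBracket.bracket_rightPow_succ (hL : IsLeibnizBracket b) (u v : L) (k : ℕ) :
    b u (rightPow b v (k + 1)) = 0 := by
  induction k generalizing u with
  | zero => simp [rightPow, hL.bracket_bracket]
  | succ k ih => rw [rightPow, hL.bracket_bracket, ih, ih, map_zero, LinearMap.zero_apply, sub_zero]

lemma IsLeibnizBracket.rightPow_bracket_of_bracket_eq_smul (hL : IsLeibnizBracket b)
    (hvx : b v x = a • v) (k : ℕ) :
    b (rightPow b v k) x = ((k + 1 : ℂ) * a) • rightPow b v k := by
  induction k with
  | zero => simp [rightPow, hvx]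
  | succ k ih =>
    simp only [rightPow, hL _ v x, ih, hvx, map_smul, LinearMap.smul_apply]
    push_cast
    module

lemma lowerCentral_le_span_rightPow_sup (hL : IsLeibnizBracket b) (hv : v ∈ N)
    (hgen : N ≤ (ℂ ∙ v) ⊔ lowerCentral b N 1) (k : ℕ) :
    lowerCentral b N k ≤ (ℂ ∙ rightPow b v k) ⊔ lowerCentral b N (k + 1) := by
  induction k with
  | zero => exact hgen
  | succ k ih =>
    refine bracketSpan_le.2 fun p hp q hq => ?_
    obtain ⟨c, hc⟩ := mem_span_singleton_sup_iff.1 (ih hp)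
    obtain ⟨d, hd⟩ := mem_span_singleton_sup_iff.1 (hgen hq)
    have hpow := hL.bracket_mem_lowerCentral (rightPow_mem_lowerCentral (b := b) hv k) hd
    refine mem_span_singleton_sup_iff.2 ⟨c * d, ?_⟩
    convert add_mem (bracket_mem_lowerCentral_succ hc hq) (smul_mem _ c hpow) using 1
    simp only [rightPow, map_sub, map_smul, LinearMap.sub_apply, LinearMap.smul_apply]
    module

lemma lowerCentral_le_of_rightPow_mem (hL : IsLeibnizBracket b) (hnil : IsNilpotentOn b N)
    (hv : v ∈ N) (hgen : N ≤ (ℂ ∙ v) ⊔ lowerCentral b N 1) (hA : ∀ j ≥ k, rightPow b v j ∈ A) :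
    lowerCentral b N k ≤ A := by
  induction k using hnil.decreasing_induction with
  | bot k hk => exact hk ▸ bot_le
  | step k ih =>
    refine (lowerCentral_le_span_rightPow_sup hL hv hgen k).trans (sup_le ?_ ?_)
    · exact (span_singleton_le_iff_mem _ _).2 (hA k le_rfl)
    · exact ih fun j hj => hA j (Nat.le_of_succ_le hj)

lemma bracket_eq_zero_of_mem_lowerCentral_one (hL : IsLeibnizBracket b)
    (hnil : IsNilpotentOn b N) (hv : v ∈ N) (hgen : N ≤ (ℂ ∙ v) ⊔ lowerCentral b N 1) (u : L)
    (hw : w ∈ lowerCentral b N 1) : b u w = 0 := by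
  suffices lowerCentral b N 1 ≤ LinearMap.ker (b u) from this hw
  refine lowerCentral_le_of_rightPow_mem hL hnil hv hgen fun j hj => ?_
  obtain ⟨j, rfl⟩ := Nat.exists_eq_add_of_le' hj
  exact hL.bracket_rightPow_succ u v j

lemma bracket_self_ne_zero (hL : IsLeibnizBracket b) (hnil : IsNilpotentOn b N) (hv : v ∈ N)
    (hgen : N ≤ (ℂ ∙ v) ⊔ lowerCentral b N 1) (hNsq : lowerCentral b N 1 ≠ ⊥) : b v v ≠ 0 := by
  intro hvv
  refine hNsq (le_bot_iff.1 (lowerCentral_le_of_rightPow_mem hL hnil hv hgen fun j hj => ?_))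
  induction j, hj using Nat.le_induction with
  | base => exact hvv
  | succ j _ ih => simp [rightPow, (mem_bot ℂ).1 ih]

lemma mem_lowerCentral_one_of_bracket_eq_zero (hL : IsLeibnizBracket b)
    (hnil : IsNilpotentOn b N) (hv : v ∈ N) (hgen : N ≤ (ℂ ∙ v) ⊔ lowerCentral b N 1)
    (hNsq : lowerCentral b N 1 ≠ ⊥) (hu : u ∈ N) (hvu : b v u = 0) : u ∈ lowerCentral b N 1 := by
  obtain ⟨c, hc⟩ := mem_span_singleton_sup_iff.1 (hgen hu)
  have hcv : c • b v v = 0 := by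
    simpa [hvu] using bracket_eq_zero_of_mem_lowerCentral_one hL hnil hv hgen v hc
  have hc0 : c = 0 :=
    (smul_eq_zero.1 hcv).resolve_right (bracket_self_ne_zero hL hnil hv hgen hNsq)
  simpa [hc0] using hc

lemma exists_basis_rightPow (hL : IsLeibnizBracket b) (hN : bracketSpan b N N ≤ N) (hv : v ∈ N)
    (hgen : N ≤ (ℂ ∙ v) ⊔ lowerCentral b N 1) (hdim : finrank ℂ N = n)
    (hbot : lowerCentral b N n = ⊥) :
    ∃ B : Basis (Fin n) ℂ N, ∀ i, (B i : L) = rightPow b v i := by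
  let p (i : Fin n) : N :=
    ⟨rightPow b v i, lowerCentral_antitone hN (Nat.zero_le i) (rightPow_mem_lowerCentral hv i)⟩
  have hle : N ≤ (span ℂ (Set.range p)).map N.subtype := by
    refine lowerCentral_le_of_rightPow_mem (k := 0) hL ⟨n, hbot⟩ hv hgen fun j _ => ?_
    rcases lt_or_ge j n with hj | hj
    · exact mem_map_of_mem (f := N.subtype) (subset_span (Set.mem_range_self (f := p) ⟨j, hj⟩))
    · have hzero := rightPow_mem_lowerCentral (b := b) hv j
      rw [lowerCentral_eq_bot_of_le hbot hj, mem_bot] at hzero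
      exact hzero ▸ zero_mem _
  have hspan : ⊤ ≤ span ℂ (Set.range p) := fun u _ => by
    obtain ⟨u', hu', huu'⟩ := mem_map.1 (hle u.2)
    rwa [← Subtype.ext huu']
  exact ⟨basisOfTopLeSpanOfCardEqFinrank p hspan (by simp [hdim]), fun i => by simp [p]⟩

/-! ### The defining relations of `R₀` -/

/-- The relations satisfied by the basis vectors `x = e₀` and `v = e₁` of `R₀`. -/
structure R0Relations (b : L →ₗ[ℂ] L →ₗ[ℂ] L) (x v : L) : Prop where
  bracket_self : b x x = 0
  bracket_left : b v x = (-1 : ℂ) • v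
  bracket_right : b x v = v

lemma HasWeight.exists_eigenvector_generator (hL : IsLeibnizBracket b)
    (hN : bracketSpan b N N ≤ N) (hnil : IsNilpotentOn b N) (hx : HasWeight b N x a) (ha : a ≠ 0)
    (he : e ∈ N) (hgen : N ≤ (ℂ ∙ e) ⊔ lowerCentral b N 1) :
    ∃ v ∈ N, N ≤ (ℂ ∙ v) ⊔ lowerCentral b N 1 ∧ b v x = a • v := by
  obtain ⟨y, hy, hyx⟩ :=
    hx.exists_bracket_sub_smul_eq hL hN hnil (natCast_add_one_mul_ne_self ha) (hx e he)
  refine ⟨e - y, sub_mem he (lowerCentral_antitone hN zero_le_one hy), ?_, ?_⟩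
  · refine hgen.trans (sup_le ?_ le_sup_right)
    refine (span_singleton_le_iff_mem _ _).2 (mem_span_singleton_sup_iff.2 ⟨1, ?_⟩)
    simpa using hy
  · rw [map_sub, LinearMap.sub_apply, ← sub_eq_zero, ← sub_eq_zero.2 hyx.symm]
    module

lemma HasWeight.exists_r0Relations (hL : IsLeibnizBracket b) (hN : bracketSpan b ⊤ ⊤ ≤ N)
    (hnil : IsNilpotentOn b N) (hx : HasWeight b N x (-1)) (hv : v ∈ N)
    (hgen : N ≤ (ℂ ∙ v) ⊔ lowerCentral b N 1) (hNsq : lowerCentral b N 1 ≠ ⊥)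
    (hvx : b v x = (-1 : ℂ) • v) : ∃ y ∈ N, R0Relations b (x + y) v := by
  have hNN : bracketSpan b N N ≤ N := (bracketSpan_mono le_top le_top).trans hN
  have mem_N (u w : L) : b u w ∈ N := hN (bracket_mem_bracketSpan mem_top mem_top)
  have mem_Nsq {u : L} (hu : u ∈ N) (hvu : b v u = 0) : u ∈ lowerCentral b N 1 :=
    mem_lowerCentral_one_of_bracket_eq_zero hL hnil hv hgen hNsq hu hvu
  have hxx : -b x x ∈ lowerCentral b N 1 :=
    neg_mem (mem_Nsq (mem_N x x) (by rw [hL.bracket_bracket, sub_self]))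
  obtain ⟨y, hy, hyx⟩ : ∃ y ∈ lowerCentral b N 1, b y x - (0 : ℂ) • y = -b x x :=
    hx.exists_bracket_sub_smul_eq hL hNN hnil
      (fun j _ => mul_ne_zero j.cast_add_one_ne_zero (by simp)) hxx
  have bracket_y (u : L) : b u (x + y) = b u x := by
    rw [map_add, bracket_eq_zero_of_mem_lowerCentral_one hL hnil hv hgen u hy, add_zero]
  have hself : b (x + y) (x + y) = 0 := by
    rw [bracket_y, map_add, LinearMap.add_apply, ← zero_smul ℂ y, ← sub_add_cancel (b y x), hyx]
    simp
  -- `w = [x + y, v] - v` is killed by `v`, so it lies in `N²`, where `-1` is not an eigenvalue.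
  set w := b (x + y) v - v with hw
  have hvw : b v w = 0 := by
    rw [hw, map_sub, hL.bracket_bracket, hL v v (x + y), bracket_y, hvx]
    simp
  have hwx : b w x = (-1 : ℂ) • w := by
    rw [← bracket_y, hw, map_sub, LinearMap.sub_apply, hL, hself, bracket_y, hvx]
    simp only [smul_sub, map_smul, map_zero, LinearMap.zero_apply, zero_add]
  have hw0 : w = 0 := hx.eq_zero_of_bracket_eq_smul hL hnil
    (natCast_add_one_mul_ne_self (by simp)) (mem_Nsq (sub_mem (mem_N _ _) hv) hvw) hwx
  exact ⟨y, lowerCentral_antitone hNN zero_le_one hy, hself, bracket_y v ▸ hvx, sub_eq_zero.1 hw0⟩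

/-- The sequence `e₀ = x`, `e₁ = v`, `e₂ = [v, v]`, …, which for `R0Relations b x v` multiplies
like the standard basis of `R₀`. -/
def r0Seq (b : L →ₗ[ℂ] L →ₗ[ℂ] L) (x v : L) : ℕ → L
  | 0 => x
  | k + 1 => rightPow b v k

lemma R0Relations.r0Seq_bracket_left (hr : R0Relations b x v) (hL : IsLeibnizBracket b) (k : ℕ) :
    b (r0Seq b x v k) x = (-k : ℂ) • r0Seq b x v k := by
  cases k with
  | zero => simpa [r0Seq] using hr.bracket_self
  | succ k => simpa [r0Seq] using hL.rightPow_bracket_of_bracket_eq_smul hr.bracket_left k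

lemma R0Relations.r0Seq_bracket_right (hr : R0Relations b x v) (k : ℕ) :
    b (r0Seq b x v k) v = r0Seq b x v (k + 1) := by
  cases k with
  | zero => exact hr.bracket_right
  | succ k => rfl

lemma exists_basis_r0Seq {α : L →ₗ[ℂ] ℂ} (hα : LinearMap.ker α = N) (hx : α x ≠ 0)
    (B : Basis (Fin n) ℂ N) (hB : ∀ i, (B i : L) = rightPow b v i) :
    ∃ E : Basis (Fin (n + 1)) ℂ L, ∀ i, E i = r0Seq b x v i := by
  subst hα
  refine ⟨Basis.mkFinCons x B (fun c u hu h => ?_) fun z => ⟨-α z / α x, ?_⟩, fun i => ?_⟩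
  · have hαu : c * α x = 0 := by simpa [LinearMap.mem_ker.1 hu] using congrArg α h
    exact (mul_eq_zero.1 hαu).resolve_right hx
  · simp [hx]
  · rw [Basis.coe_mkFinCons]
    cases i using Fin.cases with
    | zero => rfl
    | succ i => exact hB i

/-! ### Null-filiform subalgebras -/

lemma IsNullFiliform.finrank_lowerCentral (hNF : IsNullFiliform b N n) (hk : k ≤ n) :
    finrank ℂ (lowerCentral b N k) = n - k := by
  simpa using hNF.2 (k + 1) (by omega) (by omega)

lemma IsNullFiliform.lowerCentral_eq_bot (hNF : IsNullFiliform b N n) (hn : 0 < n)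
    (hN : bracketSpan b N N ≤ N) : lowerCentral b N n = ⊥ := by
  have : Module.Finite ℂ N := finite_of_finrank_pos (hNF.1 ▸ hn)
  have hle : lowerCentral b N n ≤ N := lowerCentral_antitone hN (Nat.zero_le n)
  have : Module.Finite ℂ (lowerCentral b N n) := finiteDimensional_of_le hle
  rw [← finrank_eq_zero (R := ℂ), hNF.finrank_lowerCentral le_rfl, Nat.sub_self]

lemma IsNullFiliform.lowerCentral_one_ne_bot (hNF : IsNullFiliform b N n) (hn : 2 ≤ n) :
    lowerCentral b N 1 ≠ ⊥ := fun h => by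
  have hdim := hNF.finrank_lowerCentral (k := 1) (by omega)
  rw [h, finrank_bot] at hdim
  omega

lemma IsNullFiliform.exists_generator (hNF : IsNullFiliform b N n) (hn : 0 < n)
    (hN : bracketSpan b N N ≤ N) :
    ∃ e ∈ N, e ∉ lowerCentral b N 1 ∧ N ≤ (ℂ ∙ e) ⊔ lowerCentral b N 1 := by
  refine exists_le_span_singleton_sup_of_finrank_eq_add_one hN ?_
  have hdim := hNF.finrank_lowerCentral (k := 1) hn
  rw [hdim, hNF.1]
  omega

end Leibniz

/-! ### The model algebra -/

section Model

/-- `bracketR0` as a bilinear map. -/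
def bracketR0Bilin (n : ℕ) :
    (Fin (n + 1) → ℂ) →ₗ[ℂ] (Fin (n + 1) → ℂ) →ₗ[ℂ] (Fin (n + 1) → ℂ) :=
  LinearMap.mk₂ ℂ (bracketR0 n)
    (fun _ _ _ => by ext k; simp only [bracketR0, Pi.add_apply]; split_ifs <;> ring)
    (fun _ _ _ => by ext k; simp only [bracketR0, Pi.smul_apply, smul_eq_mul]; split_ifs <;> ring)
    (fun _ _ _ => by ext k; simp only [bracketR0, Pi.add_apply]; split_ifs <;> ring)
    (fun _ _ _ => by ext k; simp only [bracketR0, Pi.smul_apply, smul_eq_mul]; split_ifs <;> ring)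

/-- The standard basis vector `e_k` of `R₀`, indexed by `ℕ` with `e_k = 0` for `k > n`, so that
`[e_k, e₁] = e_{k+1}` holds for every `k`. -/
def r0Vec (n k : ℕ) : Fin (n + 1) → ℂ := fun i => if i.val = k then 1 else 0

variable {n : ℕ}

lemma r0Vec_apply_one (hn : 1 ≤ n) (k : ℕ) : r0Vec n k 1 = if 1 = k then 1 else 0 := by
  rw [r0Vec, Fin.val_one', Nat.mod_eq_of_lt (by omega)]

lemma bracketR0_r0Vec_zero (hn : 1 ≤ n) (k : ℕ) :
    bracketR0 n (r0Vec n k) (r0Vec n 0) = (-k : ℂ) • r0Vec n k := by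
  ext i
  simp only [bracketR0, r0Vec_apply_one hn]
  by_cases hik : i.val = k <;> simp [r0Vec, hik]

lemma bracketR0_r0Vec_one (hn : 1 ≤ n) (k : ℕ) :
    bracketR0 n (r0Vec n k) (r0Vec n 1) = r0Vec n (k + 1) := by
  ext i
  have hi : 1 ≤ i.val ∧ i.val - 1 = k ↔ i.val = k + 1 := by omega
  simp only [bracketR0, r0Vec_apply_one hn]
  simp [r0Vec, ← ite_and, hi]

lemma bracketR0_r0Vec_add_two (hn : 1 ≤ n) (k j : ℕ) :
    bracketR0 n (r0Vec n k) (r0Vec n (j + 2)) = 0 := by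
  ext i
  simp only [bracketR0, r0Vec_apply_one hn]
  simp [r0Vec]

variable {L : Type*} [AddCommGroup L] [Module ℂ L] {b : L →ₗ[ℂ] L →ₗ[ℂ] L} {x v : L}

lemma R0Relations.equivFun_bracket (hr : R0Relations b x v) (hL : IsLeibnizBracket b)
    (hn : 1 ≤ n) (hpow : rightPow b v n = 0) (E : Module.Basis (Fin (n + 1)) ℂ L)
    (hE : ∀ i, E i = r0Seq b x v i) (u w : L) :
    E.equivFun (b u w) = bracketR0 n (E.equivFun u) (E.equivFun w) := by
  have hvec (k : ℕ) (hk : k ≤ n + 1) : E.equivFun (r0Seq b x v k) = r0Vec n k := by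
    rcases hk.lt_or_eq with hk | rfl
    · ext i
      rw [← hE ⟨k, hk⟩]
      simp [r0Vec, Fin.ext_iff, eq_comm]
    · ext i
      simp [r0Seq, hpow, r0Vec, i.isLt.ne]
  let φ : L →ₗ[ℂ] Fin (n + 1) → ℂ := E.equivFun
  have hφ : b.compr₂ φ = (bracketR0Bilin n).compl₁₂ φ φ := by
    refine E.ext fun i => E.ext fun j => ?_
    change E.equivFun (b (E i) (E j)) = bracketR0 n (E.equivFun (E i)) (E.equivFun (E j))
    rw [hE, hE, hvec i i.isLt.le, hvec j j.isLt.le]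
    obtain ⟨_ | _ | j, hj⟩ := j
    · rw [bracketR0_r0Vec_zero hn, ← hvec i i.isLt.le, ← map_smul, ← hr.r0Seq_bracket_left hL,
        r0Seq]
    · rw [bracketR0_r0Vec_one hn, ← hvec (i + 1) i.isLt, ← hr.r0Seq_bracket_right i]
      rfl
    · rw [bracketR0_r0Vec_add_two hn, r0Seq, hL.bracket_rightPow_succ, map_zero]
  exact LinearMap.congr_fun₂ hφ u w

end Model

theorem solvable_leibniz_with_nullfiliform_nilradical_general
    (n : ℕ) (hn : 2 ≤ n)
    (L : Type*) [AddCommGroup L] [Module ℂ L]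
    (b : L →ₗ[ℂ] L →ₗ[ℂ] L) (hLeib : IsLeibnizBracket b)
    (hsolv : IsSolvableBracket b)
    (hnotnilp : ¬ IsNilpotentOn b (⊤ : Submodule ℂ L))
    (N : Submodule ℂ L) (hNrad : IsNilradical b N)
    (hNF : IsNullFiliform b N n) :
    Module.finrank ℂ L = n + 1 ∧
      ∃ φ : L ≃ₗ[ℂ] (Fin (n + 1) → ℂ),
        ∀ u v : L, φ (b u v) = bracketR0 n (φ u) (φ v) := by
  have hNN := hNrad.1.bracketSpan_self_le
  have hbot : lowerCentral b N n = ⊥ := hNF.lowerCentral_eq_bot (by omega) hNN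
  obtain ⟨e, he, he', hgen⟩ := hNF.exists_generator (by omega) hNN
  obtain ⟨α, hα⟩ := exists_linear_hasWeight hLeib hNrad.1 he he' hgen
  have hNsq : ¬ N ≤ lowerCentral b N 1 := fun h => he' (h he)
  have hker : LinearMap.ker α = N := hNrad.ker_weight_eq hLeib hsolv hNsq hα
  have hα0 : α ≠ 0 := by
    rintro rfl
    exact hnotnilp (by simpa [← hker] using hNrad.2.1)
  obtain ⟨x, hx⟩ : ∃ x, α x = -1 := LinearMap.surjective hα0 (-1)
  have hweight : HasWeight b N x (-1) := hx ▸ hα x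
  obtain ⟨v, hv, hvgen, hvx⟩ :=
    hweight.exists_eigenvector_generator hLeib hNN hNrad.2.1 (by simp) he hgen
  have hbracket : bracketSpan b ⊤ ⊤ ≤ N :=
    hker ▸ bracketSpan_top_le_ker_weight hLeib hNrad.1 hNsq hα
  obtain ⟨y, hy, hr⟩ := hweight.exists_r0Relations hLeib hbracket hNrad.2.1 hv hvgen
    (hNF.lowerCentral_one_ne_bot hn) hvx
  obtain ⟨B, hB⟩ := exists_basis_rightPow hLeib hNN hv hvgen hNF.1 hbot
  have hαxy : α (x + y) ≠ 0 := by simp [hx, LinearMap.mem_ker.1 (hker.ge hy)]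
  obtain ⟨E, hE⟩ := exists_basis_r0Seq (x := x + y) hker hαxy B hB
  have hpow : rightPow b v n = 0 := by simpa [hbot] using rightPow_mem_lowerCentral (b := b) hv n
  exact ⟨by simp [Module.finrank_eq_card_basis E], E.equivFun,
    hr.equivFun_bracket hLeib (by omega) hpow E hE⟩

/-- Any finite-dimensional complex solvable non-nilpotent Leibniz algebra whose nilradical is
null-filiform of dimension `n ≥ 2` has dimension `n + 1` and is isomorphic to `R₀`. -/
theorem solvable_leibniz_with_nullfiliform_nilradical
    (n : ℕ) (hn : 2 ≤ n)
    (L : Type) [AddCommGroup L] [Module ℂ L] [FiniteDimensional ℂ L]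
    (b : L →ₗ[ℂ] L →ₗ[ℂ] L) (hLeib : IsLeibnizBracket b)
    (hsolv : IsSolvableBracket b)
    (hnotnilp : ¬ IsNilpotentOn b (⊤ : Submodule ℂ L))
    (N : Submodule ℂ L) (hNrad : IsNilradical b N)
    (hNF : IsNullFiliform b N n) :
    Module.finrank ℂ L = n + 1 ∧
      ∃ φ : L ≃ₗ[ℂ] (Fin (n + 1) → ℂ),
        ∀ u v : L, φ (b u v) = bracketR0 n (φ u) (φ v) := by
  exact solvable_leibniz_with_nullfiliform_nilradical_general
    n hn L b hLeib hsolv hnotnilp N hNrad hNF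
end

section
/- Let n ≥ 5. The (n+2)-dimensional complex solvable Leibniz algebras R_1, R_2 and R_3 are pairwise non-isomorphic. -/
/-!
`R₁` is the `(n+2)`-dimensional complex solvable Leibniz algebra with basis
`e_1, …, e_n, x, y` and nonzero products `[e_i, e_1] = e_{i+1}` for `2 ≤ i ≤ n-1`,
`[e_1, x] = e_1`, `[x, e_1] = -e_1`, `[e_i, x] = (i-1) • e_i` for `2 ≤ i ≤ n`,
`[e_i, y] = e_i` for `2 ≤ i ≤ n`.  We realize it on `Fin (n+2) → ℂ`, where
`x = Pi.single 0 1`, `e_i = Pi.single i 1` for `1 ≤ i ≤ n` and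
`y = Pi.single (Fin.last (n+1)) 1`, the bracket being given coordinatewise.
-/

/-- The bracket of the Leibniz algebra `R₁` on `Fin (n+2) → ℂ`. -/
def bracketR1 (n : ℕ) (u v : Fin (n + 2) → ℂ) : Fin (n + 2) → ℂ := fun k =>
  if k.val = 1 then u 1 * v 0 - u 0 * v 1
  else if 2 ≤ k.val ∧ k.val ≤ n then
    (if 3 ≤ k.val then u ⟨k.val - 1, lt_of_le_of_lt (Nat.sub_le _ _) k.isLt⟩ * v 1 else 0)
      + ((k.val : ℂ) - 1) * u k * v 0 + u k * v (Fin.last (n + 1))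
  else 0

/-!
`R₂` is the `(n+2)`-dimensional complex solvable Leibniz algebra with basis
`e_1, …, e_n, x, y` and nonzero products `[e_1, e_1] = e_3`,
`[e_i, e_1] = e_{i+1}` for `3 ≤ i ≤ n-1`, `[e_1, x] = e_1`, `[x, e_1] = -e_1`,
`[e_i, x] = (i-1) • e_i` for `3 ≤ i ≤ n`, `[e_2, y] = e_2`, `[y, e_2] = -e_2`.
We realize it on `Fin (n+2) → ℂ`, where `x = Pi.single 0 1`,
`e_i = Pi.single i 1` for `1 ≤ i ≤ n` and `y = Pi.single (Fin.last (n+1)) 1`,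
the bracket being given coordinatewise.
-/

/-- The bracket of the Leibniz algebra `R₂` on `Fin (n+2) → ℂ`. -/
def bracketR2 (n : ℕ) (u v : Fin (n + 2) → ℂ) : Fin (n + 2) → ℂ := fun k =>
  if k.val = 1 then u 1 * v 0 - u 0 * v 1
  else if k.val = 2 then u 2 * v (Fin.last (n + 1)) - u (Fin.last (n + 1)) * v 2
  else if 3 ≤ k.val ∧ k.val ≤ n then
    (if 4 ≤ k.val then u ⟨k.val - 1, lt_of_le_of_lt (Nat.sub_le _ _) k.isLt⟩ * v 1
      else u 1 * v 1)
      + ((k.val : ℂ) - 1) * u k * v 0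
  else 0

/-!
`R₃` is the `(n+2)`-dimensional complex solvable Leibniz algebra with basis
`e_1, …, e_n, x, y` and nonzero products `[e_1, e_1] = e_3`,
`[e_i, e_1] = e_{i+1}` for `3 ≤ i ≤ n-1`, `[e_1, x] = e_1`, `[x, e_1] = -e_1`,
`[e_i, x] = (i-1) • e_i` for `3 ≤ i ≤ n`, `[e_2, y] = e_2`.
We realize it on `Fin (n+2) → ℂ`, where `x = Pi.single 0 1`,
`e_i = Pi.single i 1` for `1 ≤ i ≤ n` and `y = Pi.single (Fin.last (n+1)) 1`,
the bracket being given coordinatewise.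
-/

/-- The bracket of the Leibniz algebra `R₃` on `Fin (n+2) → ℂ`. -/
def bracketR3 (n : ℕ) (u v : Fin (n + 2) → ℂ) : Fin (n + 2) → ℂ := fun k =>
  if k.val = 1 then u 1 * v 0 - u 0 * v 1
  else if k.val = 2 then u 2 * v (Fin.last (n + 1))
  else if 3 ≤ k.val ∧ k.val ≤ n then
    (if 4 ≤ k.val then u ⟨k.val - 1, lt_of_le_of_lt (Nat.sub_le _ _) k.isLt⟩ * v 1
      else u 1 * v 1)
      + ((k.val : ℂ) - 1) * u k * v 0
  else 0


/-- Two brackets on `Fin (n+2) → ℂ` give isomorphic Leibniz algebras: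
there is a bijective `ℂ`-linear map carrying one bracket to the other. -/
def LeibnizIso (n : ℕ)
    (b b' : (Fin (n + 2) → ℂ) → (Fin (n + 2) → ℂ) → (Fin (n + 2) → ℂ)) : Prop :=
  ∃ φ : (Fin (n + 2) → ℂ) ≃ₗ[ℂ] (Fin (n + 2) → ℂ), ∀ u v, φ (b u v) = b' (φ u) (φ v)

/-!
Compare the lines that are two-sided ideals. If `[u, v] ≠ 0` and `v` spans an ideal, then `v` is
proportional to a product. In `R₁` and `R₃` products have no `x`- or `y`-component, and the
`e_1`-component of `v` vanishes because of `[e_2, e_1] = e_3`, respectively `[e_1, e_1] = e_3`; the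
remaining vectors, in `⟨e_2, …, e_n⟩`, form the right annihilator. So there every line that is an
ideal lies in the right annihilator. In `R₂` the ideal `⟨e_2⟩` does not, as `[y, e_2] = -e_2`.

In `R₃` both `⟨e_2⟩` and `⟨e_n⟩` are ideals, whereas in `R₁` only `⟨e_n⟩` is: the line is an
eigenspace for right multiplication by `x`, which has distinct eigenvalues on `e_2, …, e_n`, and
right multiplication by `e_1` moves `e_2, …, e_{n-1}` off their lines.
-/

section Bracket

variable {K V W : Type*}

/-- The vector `v` generates a two-sided ideal of dimension at most one for the bracket `b`:
every product of `v`, on either side, is a scalar multiple of `v`. -/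
def SpansIdeal (K : Type*) [SMul K V] (b : V → V → V) (v : V) : Prop :=
  ∀ u, (∃ c : K, b u v = c • v) ∧ ∃ c : K, b v u = c • v

/-- The right annihilator `{v | [u, v] = 0 for all u}` of a bracket, as a plain set since `b` is
not required to be bilinear. -/
def rightAnnihilator [Zero V] (b : V → V → V) : Set V :=
  {v | ∀ u, b u v = 0}

section Map

variable [Semiring K] [AddCommMonoid V] [AddCommMonoid W] [Module K V] [Module K W]
  {b : V → V → V} {b' : W → W → W} {v : V}

theorem SpansIdeal.map (φ : V →ₗ[K] W) (hφ : Function.Surjective φ)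
    (hb : ∀ u v, φ (b u v) = b' (φ u) (φ v)) (hv : SpansIdeal K b v) :
    SpansIdeal K b' (φ v) := by
  refine hφ.forall.2 fun u => ?_
  obtain ⟨⟨c, hc⟩, d, hd⟩ := hv u
  exact ⟨⟨c, by rw [← hb, hc, map_smul]⟩, d, by rw [← hb, hd, map_smul]⟩

theorem mem_rightAnnihilator_of_map_mem (φ : V →ₗ[K] W) (hφ : Function.Injective φ)
    (hb : ∀ u v, φ (b u v) = b' (φ u) (φ v)) (hv : φ v ∈ rightAnnihilator b') :
    v ∈ rightAnnihilator b :=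
  fun u => hφ (by rw [hb, hv (φ u), map_zero])

end Map

section Coordinates

variable [MulZeroClass K] [NoZeroDivisors K] {ι : Type*} {b : (ι → K) → (ι → K) → ι → K}
  {u v : ι → K}

theorem SpansIdeal.eq_zero_of_bracket_apply_eq_zero {i : ι} (hv : SpansIdeal K b v)
    (hi : b u v i = 0) (hne : b u v ≠ 0) : v i = 0 := by
  obtain ⟨c, hc⟩ := (hv u).1
  have hci : c * v i = 0 := by rw [← hi, hc, Pi.smul_apply, smul_eq_mul]
  refine (mul_eq_zero.1 hci).resolve_left fun h0 => hne ?_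
  ext j
  rw [hc, h0, Pi.smul_apply, smul_eq_mul, zero_mul, Pi.zero_apply]

theorem SpansIdeal.mem_rightAnnihilator {x y e k : ι} (hv : SpansIdeal K b v)
    (hx : ∀ u w, b u w x = 0) (hy : ∀ u w, b u w y = 0)
    (hann : ∀ w, w x = 0 → w e = 0 → w y = 0 → w ∈ rightAnnihilator b)
    (a : ι → K) (hae : ∀ w, w x = 0 → b a w e = 0) (hak : ∀ w, b a w k = w e) :
    v ∈ rightAnnihilator b := by
  by_contra hnot
  obtain ⟨u, hu⟩ : ∃ u, b u v ≠ 0 := not_forall.1 hnot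
  have hvx : v x = 0 := hv.eq_zero_of_bracket_apply_eq_zero (hx u v) hu
  have hvy : v y = 0 := hv.eq_zero_of_bracket_apply_eq_zero (hy u v) hu
  have hve : v e = 0 := by
    by_contra hne
    refine hne (hv.eq_zero_of_bracket_apply_eq_zero (hae v hvx) fun h0 => hne ?_)
    rw [← hak v, h0, Pi.zero_apply]
  exact hnot (hann v hvx hve hvy)

end Coordinates

end Bracket

variable {n : ℕ} {u v w : Fin (n + 2) → ℂ}

theorem LeibnizIso.symm {b b' : (Fin (n + 2) → ℂ) → (Fin (n + 2) → ℂ) → (Fin (n + 2) → ℂ)}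
    (h : LeibnizIso n b b') : LeibnizIso n b' b := by
  obtain ⟨φ, hφ⟩ := h
  refine ⟨φ.symm, fun u v => ?_⟩
  rw [φ.symm_apply_eq, hφ, φ.apply_symm_apply, φ.apply_symm_apply]

theorem fin_val_two (hn : 1 ≤ n) : ((2 : Fin (n + 2)) : ℕ) = 2 :=
  Nat.mod_eq_of_lt (show 2 < n + 2 by omega)

section R1

theorem bracketR1_apply_zero : bracketR1 n u v 0 = 0 := by
  simp [bracketR1]

theorem bracketR1_apply_one : bracketR1 n u v 1 = u 1 * v 0 - u 0 * v 1 := by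
  simp [bracketR1]

theorem bracketR1_apply_last (hn : 1 ≤ n) : bracketR1 n u v (Fin.last (n + 1)) = 0 := by
  simp [bracketR1, Nat.one_le_iff_ne_zero.1 hn]

theorem bracketR1_apply_two (hn : 2 ≤ n) :
    bracketR1 n u v 2 = u 2 * v 0 + u 2 * v (Fin.last (n + 1)) := by
  simp only [bracketR1, fin_val_two (one_le_two.trans hn)]
  norm_num [hn]

theorem bracketR1_apply_succ {k : ℕ} (hk : 2 ≤ k) (hkn : k < n) :
    bracketR1 n u v ⟨k + 1, by omega⟩ = u ⟨k, by omega⟩ * v 1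
      + k * u ⟨k + 1, by omega⟩ * v 0 + u ⟨k + 1, by omega⟩ * v (Fin.last (n + 1)) := by
  simp [bracketR1, show k ≠ 0 by omega, show 1 ≤ k by omega, hk, hkn]

theorem mem_rightAnnihilator_bracketR1_iff (hn : 2 ≤ n) :
    v ∈ rightAnnihilator (bracketR1 n) ↔ v 0 = 0 ∧ v 1 = 0 ∧ v (Fin.last (n + 1)) = 0 := by
  constructor
  · intro hv
    have h0 : v 0 = 0 := by
      simpa [bracketR1_apply_one] using congrFun (hv (Pi.single 1 1)) 1
    have h1 : v 1 = 0 := by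
      simpa [bracketR1_apply_one] using congrFun (hv (Pi.single 0 1)) 1
    have hl : v (Fin.last (n + 1)) = 0 := by
      simpa [bracketR1_apply_two hn, h0] using congrFun (hv (Pi.single 2 1)) 2
    exact ⟨h0, h1, hl⟩
  · rintro ⟨h0, h1, hl⟩ u
    ext k
    simp [bracketR1, h0, h1, hl]

theorem SpansIdeal.mem_rightAnnihilator_bracketR1 (hn : 3 ≤ n)
    (hv : SpansIdeal ℂ (bracketR1 n) v) : v ∈ rightAnnihilator (bracketR1 n) := by
  refine hv.mem_rightAnnihilator (x := 0) (y := Fin.last (n + 1)) (e := 1) (k := ⟨3, by omega⟩)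
    (fun _ _ => bracketR1_apply_zero) (fun _ _ => bracketR1_apply_last (by omega))
    (fun w h0 h1 hl => (mem_rightAnnihilator_bracketR1_iff (by omega)).2 ⟨h0, h1, hl⟩)
    (Pi.single ⟨2, by omega⟩ 1) (fun w _ => ?_) fun w => ?_
  · simp [bracketR1_apply_one, Fin.ext_iff]
  · simp [bracketR1_apply_succ le_rfl (show 2 < n by omega)]

theorem bracketR1_single_zero_apply {k : Fin (n + 2)} (hk : 2 ≤ k.val) (hkn : k.val ≤ n) :
    bracketR1 n u (Pi.single 0 1) k = (k.val - 1) * u k := by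
  simp [bracketR1, hk, hkn, show k.val ≠ 1 by omega]

theorem SpansIdeal.apply_eq_zero_of_bracketR1 {k : ℕ} (hk : 2 ≤ k) (hkn : k < n)
    (hv : SpansIdeal ℂ (bracketR1 n) v) : v ⟨k, by omega⟩ = 0 := by
  obtain ⟨c, hc⟩ := (hv (Pi.single 0 1)).2
  obtain ⟨d, hd⟩ := (hv (Pi.single 1 1)).2
  have hweight (i : Fin (n + 2)) (hi : 2 ≤ i.val) (hin : i.val ≤ n) :
      (i.val - 1) * v i = c * v i := by
    rw [← bracketR1_single_zero_apply hi hin, hc, Pi.smul_apply, smul_eq_mul]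
  have hshift : v ⟨k, by omega⟩ = d * v ⟨k + 1, by omega⟩ := by
    simpa [bracketR1_apply_succ hk hkn, Fin.ext_iff, show n ≠ 0 by omega] using
      congrFun hd ⟨k + 1, by omega⟩
  by_contra hne
  have hck : (k : ℂ) - 1 = c := mul_right_cancel₀ hne (hweight ⟨k, _⟩ hk hkn.le)
  have hsucc : v ⟨k + 1, by omega⟩ = 0 := by
    have h := hweight ⟨k + 1, by omega⟩ (show 2 ≤ k + 1 by omega) hkn
    push_cast at h
    linear_combination h - v ⟨k + 1, by omega⟩ * hck
  exact hne (by rw [hshift, hsucc, mul_zero])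

theorem SpansIdeal.exists_eq_smul_single_of_bracketR1 (hn : 3 ≤ n)
    (hv : SpansIdeal ℂ (bracketR1 n) v) :
    ∃ c : ℂ, v = c • Pi.single ⟨n, by omega⟩ 1 := by
  refine ⟨v ⟨n, by omega⟩, ?_⟩
  obtain ⟨h0, h1, hl⟩ := (mem_rightAnnihilator_bracketR1_iff (by omega)).1
    (hv.mem_rightAnnihilator_bracketR1 hn)
  ext k
  obtain rfl | hkn := eq_or_ne k ⟨n, by omega⟩
  · simp
  rw [Pi.smul_apply, Pi.single_eq_of_ne hkn, smul_zero]
  rw [Ne, Fin.ext_iff] at hkn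
  obtain hk | hk | hk | ⟨hk, hk'⟩ :
      k.val = 0 ∨ k.val = 1 ∨ k.val = n + 1 ∨ 2 ≤ k.val ∧ k.val < n := by grind
  · rwa [Fin.ext (b := 0) hk]
  · rwa [Fin.ext (b := 1) hk]
  · rwa [Fin.ext (b := Fin.last (n + 1)) hk]
  · exact hv.apply_eq_zero_of_bracketR1 hk hk'

theorem SpansIdeal.exists_eq_smul_of_bracketR1 (hn : 3 ≤ n) (hv0 : v ≠ 0)
    (hv : SpansIdeal ℂ (bracketR1 n) v) (hw : SpansIdeal ℂ (bracketR1 n) w) :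
    ∃ c : ℂ, w = c • v := by
  obtain ⟨a, rfl⟩ := hv.exists_eq_smul_single_of_bracketR1 hn
  obtain ⟨b, rfl⟩ := hw.exists_eq_smul_single_of_bracketR1 hn
  exact ⟨b / a, by rw [smul_smul, div_mul_cancel₀ b (left_ne_zero_of_smul hv0)]⟩

end R1

section R2

theorem bracketR2_single_two_left (hn : 2 ≤ n) :
    bracketR2 n (Pi.single 2 1) u = u (Fin.last (n + 1)) • Pi.single 2 1 := by
  have h2 := fin_val_two (one_le_two.trans hn)
  ext k
  simp only [bracketR2, Pi.smul_apply, Pi.single_apply, Fin.ext_iff, h2, Fin.val_zero,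
    Fin.val_one, Fin.val_last]
  split_ifs <;> first | omega | simp_all

theorem bracketR2_single_two_right (hn : 2 ≤ n) :
    bracketR2 n u (Pi.single 2 1) = -u (Fin.last (n + 1)) • Pi.single 2 1 := by
  have h2 := fin_val_two (one_le_two.trans hn)
  ext k
  simp only [bracketR2, Pi.smul_apply, Pi.single_apply, Fin.ext_iff, h2, Fin.val_zero,
    Fin.val_one, Fin.val_last]
  split_ifs <;> first | omega | simp_all

theorem spansIdeal_bracketR2_single_two (hn : 2 ≤ n) :
    SpansIdeal ℂ (bracketR2 n) (Pi.single 2 1) :=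
  fun _ => ⟨⟨_, bracketR2_single_two_right hn⟩, _, bracketR2_single_two_left hn⟩

theorem single_two_notMem_rightAnnihilator_bracketR2 (hn : 2 ≤ n) :
    Pi.single 2 1 ∉ rightAnnihilator (bracketR2 n) := by
  intro h
  have hy := h (Pi.single (Fin.last (n + 1)) 1)
  simp [bracketR2_single_two_right hn] at hy

theorem not_leibnizIso_bracketR2_of_spansIdeal (hn : 2 ≤ n)
    {b : (Fin (n + 2) → ℂ) → (Fin (n + 2) → ℂ) → (Fin (n + 2) → ℂ)}
    (hb : ∀ v, SpansIdeal ℂ b v → v ∈ rightAnnihilator b) :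
    ¬ LeibnizIso n (bracketR2 n) b := by
  rintro ⟨φ, hφ⟩
  have hideal := (spansIdeal_bracketR2_single_two hn).map φ.toLinearMap φ.surjective hφ
  exact single_two_notMem_rightAnnihilator_bracketR2 hn
    (mem_rightAnnihilator_of_map_mem φ.toLinearMap φ.injective hφ (hb _ hideal))

end R2

section R3

theorem bracketR3_apply_zero : bracketR3 n u v 0 = 0 := by
  simp [bracketR3]

theorem bracketR3_apply_one : bracketR3 n u v 1 = u 1 * v 0 - u 0 * v 1 := by
  simp [bracketR3]

theorem bracketR3_apply_last (hn : 2 ≤ n) : bracketR3 n u v (Fin.last (n + 1)) = 0 := by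
  simp [bracketR3, show n ≠ 0 by omega, show n ≠ 1 by omega]

theorem bracketR3_apply_three (hn : 3 ≤ n) :
    bracketR3 n u v ⟨3, by omega⟩ = u 1 * v 1 + 2 * u ⟨3, by omega⟩ * v 0 := by
  norm_num [bracketR3, hn]

theorem mem_rightAnnihilator_bracketR3_of_eq_zero (h0 : v 0 = 0) (h1 : v 1 = 0)
    (hl : v (Fin.last (n + 1)) = 0) : v ∈ rightAnnihilator (bracketR3 n) := by
  intro u
  ext k
  simp [bracketR3, h0, h1, hl]

theorem SpansIdeal.mem_rightAnnihilator_bracketR3 (hn : 3 ≤ n)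
    (hv : SpansIdeal ℂ (bracketR3 n) v) : v ∈ rightAnnihilator (bracketR3 n) := by
  refine hv.mem_rightAnnihilator (x := 0) (y := Fin.last (n + 1)) (e := 1) (k := ⟨3, by omega⟩)
    (fun _ _ => bracketR3_apply_zero) (fun _ _ => bracketR3_apply_last (by omega))
    (fun _ => mem_rightAnnihilator_bracketR3_of_eq_zero) (Pi.single 1 1) (fun w h0 => ?_)
    fun w => ?_
  · simp [bracketR3_apply_one, h0]
  · simp [bracketR3_apply_three hn, Fin.ext_iff]

theorem bracketR3_single_two_left (hn : 1 ≤ n) :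
    bracketR3 n (Pi.single 2 1) u = u (Fin.last (n + 1)) • Pi.single 2 1 := by
  have h2 := fin_val_two hn
  ext k
  simp only [bracketR3, Pi.smul_apply, Pi.single_apply, Fin.ext_iff, h2, Fin.val_zero,
    Fin.val_one]
  split_ifs <;> first | omega | simp_all

theorem bracketR3_single_n_left (hn : 3 ≤ n) :
    bracketR3 n (Pi.single ⟨n, by omega⟩ 1) u =
      ((n - 1) * u 0) • Pi.single ⟨n, by omega⟩ 1 := by
  have h2 := fin_val_two (show 1 ≤ n by omega)
  ext k
  simp only [bracketR3, Pi.smul_apply, Pi.single_apply, Fin.ext_iff, h2, Fin.val_zero,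
    Fin.val_one]
  split_ifs <;> first | omega | simp_all

theorem single_mem_rightAnnihilator_bracketR3 {i : Fin (n + 2)} (hi : 2 ≤ i.val)
    (hin : i.val ≤ n) : Pi.single i 1 ∈ rightAnnihilator (bracketR3 n) := by
  refine mem_rightAnnihilator_bracketR3_of_eq_zero ?_ ?_ ?_ <;>
    refine Pi.single_eq_of_ne (Fin.ne_of_val_ne ?_) 1 <;>
    simp only [Fin.val_zero, Fin.val_one, Fin.val_last] <;> omega

theorem spansIdeal_bracketR3_single_two (hn : 2 ≤ n) :
    SpansIdeal ℂ (bracketR3 n) (Pi.single 2 1) := by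
  have hn1 : 1 ≤ n := one_le_two.trans hn
  have h2 := fin_val_two hn1
  have hann := single_mem_rightAnnihilator_bracketR3 h2.ge (h2.trans_le hn)
  exact fun u => ⟨⟨0, by rw [hann u, zero_smul]⟩, _, bracketR3_single_two_left hn1⟩

theorem spansIdeal_bracketR3_single_n (hn : 3 ≤ n) :
    SpansIdeal ℂ (bracketR3 n) (Pi.single ⟨n, by omega⟩ 1) := by
  have hann := single_mem_rightAnnihilator_bracketR3 (i := ⟨n, by omega⟩)
    (show 2 ≤ n by omega) le_rfl
  exact fun u => ⟨⟨0, by rw [hann u, zero_smul]⟩, _, bracketR3_single_n_left hn⟩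

theorem not_leibnizIso_bracketR3_bracketR1 (hn : 3 ≤ n) :
    ¬ LeibnizIso n (bracketR3 n) (bracketR1 n) := by
  rintro ⟨φ, hφ⟩
  have hideal₂ := (spansIdeal_bracketR3_single_two (by omega)).map φ.toLinearMap φ.surjective hφ
  have hidealₙ := (spansIdeal_bracketR3_single_n hn).map φ.toLinearMap φ.surjective hφ
  obtain ⟨c, hc⟩ := hideal₂.exists_eq_smul_of_bracketR1 hn (by simp) hidealₙ
  have heₙ : Pi.single ⟨n, by omega⟩ 1 = c • (Pi.single 2 1 : Fin (n + 2) → ℂ) :=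
    φ.injective (hc.trans (map_smul φ c _).symm)
  have hne : (⟨n, by omega⟩ : Fin (n + 2)) ≠ 2 := by
    rw [Ne, Fin.ext_iff, fin_val_two (by omega)]
    exact (show 2 < n from hn).ne'
  simpa [hne] using congrFun heₙ ⟨n, by omega⟩

end R3

theorem R1_R2_R3_pairwise_nonisomorphic_general (n : ℕ) (hn : 3 ≤ n) :
    ∀ i j : Fin 3, i ≠ j →
      ¬ LeibnizIso n (![bracketR1 n, bracketR2 n, bracketR3 n] i)
        (![bracketR1 n, bracketR2 n, bracketR3 n] j) := by
  have h21 : ¬ LeibnizIso n (bracketR2 n) (bracketR1 n) :=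
    not_leibnizIso_bracketR2_of_spansIdeal (by omega) fun _ hv =>
      hv.mem_rightAnnihilator_bracketR1 hn
  have h23 : ¬ LeibnizIso n (bracketR2 n) (bracketR3 n) :=
    not_leibnizIso_bracketR2_of_spansIdeal (by omega) fun _ hv =>
      hv.mem_rightAnnihilator_bracketR3 hn
  have h31 : ¬ LeibnizIso n (bracketR3 n) (bracketR1 n) :=
    not_leibnizIso_bracketR3_bracketR1 hn
  intro i j hij
  wlog h : i < j generalizing i j
  · exact fun hiso => this j i hij.symm (lt_of_le_of_ne (not_lt.1 h) hij.symm) hiso.symm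
  obtain ⟨rfl, rfl⟩ | ⟨rfl, rfl⟩ | ⟨rfl, rfl⟩ :
      i = 0 ∧ j = 1 ∨ i = 0 ∧ j = 2 ∨ i = 1 ∧ j = 2 := by omega
  · exact fun hiso => h21 hiso.symm
  · exact fun hiso => h31 hiso.symm
  · exact h23

/-- The `(n+2)`-dimensional solvable Leibniz algebras `R₁`, `R₂`, `R₃` (`n ≥ 5`) are
pairwise non-isomorphic. -/
theorem R1_R2_R3_pairwise_nonisomorphic (n : ℕ) (hn : 5 ≤ n) :
    ∀ i j : Fin 3, i ≠ j →
      ¬ LeibnizIso n (![bracketR1 n, bracketR2 n, bracketR3 n] i)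
        (![bracketR1 n, bracketR2 n, bracketR3 n] j) :=
  R1_R2_R3_pairwise_nonisomorphic_general n (by omega)
end
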